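/- arXiv:1302.0271 — 2 statements merged into one kernel-verified Lean document; each statement's English description precedes it below -/
import Mathlib

section
/- Let k ≥ 1 be an integer, β = k·(1+√(1+4/k))/2 + 1, b_n = ⌊nβ⌋ and d_n = b_n − b_{n−1}. Consider the two-letter alphabet {σ, τ} and the morphism φ defined by φ(σ) = στ^k (the letter σ followed by k copies of τ) and φ(τ) = στ^{k+1}, extended to words by concatenation, and let w_N = φ^N(σ) be the N-th iterate applied to the one-letter word σ. Then for every N ≥ 0 and every j with 1 ≤ j ≤ length(w_N), the j-th letter of w_N is σ if and only if d_j = k+1, and is τ if and only if d_j = k+2. -/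
/-- α = (1 + √(1 + 4/k)) / 2 -/
noncomputable def alphaK (k : ℕ) : ℝ := (1 + Real.sqrt (1 + 4 / (k : ℝ))) / 2

/-- β = k·α + 1 -/
noncomputable def betaK (k : ℕ) : ℝ := (k : ℝ) * alphaK k + 1

/-- a_n = ⌊n·α⌋ -/
noncomputable def aSeq (k n : ℕ) : ℤ := ⌊(n : ℝ) * alphaK k⌋

/-- b_n = ⌊n·β⌋ -/
noncomputable def bSeq (k n : ℕ) : ℤ := ⌊(n : ℝ) * betaK k⌋

/-- c_n = a_n − a_{n−1} (used for n ≥ 1) -/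
noncomputable def cSeq (k n : ℕ) : ℤ := aSeq k n - aSeq k (n - 1)

/-- d_n = b_n − b_{n−1} (used for n ≥ 1) -/
noncomputable def dSeq (k n : ℕ) : ℤ := bSeq k n - bSeq k (n - 1)

/-- The morphism φ on the alphabet {σ, τ}, encoded with `false` = σ and
    `true` = τ: φ(σ) = στ^k, φ(τ) = στ^{k+1}. -/
def phi (k : ℕ) : Bool → List Bool
  | false => false :: List.replicate k true
  | true => false :: List.replicate (k + 1) true

/-- w_N = φ^N(σ). -/
def wordN (k N : ℕ) : List Bool := (fun w => w.flatMap (phi k))^[N] [false]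

/-!
In the mechanical word of slope `θ`, the letter at `i` is `τ` where `⌊iθ⌋` jumps and `σ` elsewhere.
For `θ = 1 - β⁻¹`, the letter `σ` stands at `i` exactly when `[iβ⁻¹, (i + 1)β⁻¹)` contains an
integer `m`, that is, when `i = ⌊mβ⌋`. So this word is cut by its `σ`s into blocks of lengths
`⌊(m + 1)β⌋ - ⌊mβ⌋`, and if `β = k + 1 + θ'` these lengths are `k + 1` and `k + 2`, distributed as
the letters of slope `θ'`: the word of slope `1 - β⁻¹` is the image under `φ` of the word of slope
`θ'`. The number `β = kα + 1` is the one for which both slopes agree.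
-/

/-- The `i`-th letter, counted from `0`, of the lower mechanical word of slope `θ`, intercept `0`,
whose value `⌊(i + 1)θ⌋ - ⌊iθ⌋` for `θ ∈ [0, 1]` is encoded as a Boolean:
`false` is `0` and `true` is `1`. -/
def mechanicalLetter {R : Type*} [Ring R] [LinearOrder R] [FloorRing R] (θ : R) (i : ℕ) : Bool :=
  decide (⌊(i : R) * θ⌋ < ⌊((i : R) + 1) * θ⌋)

/-- The prefix of length `n` of the mechanical word of slope `θ`. -/
def mechanicalPrefix {R : Type*} [Ring R] [LinearOrder R] [FloorRing R] (θ : R) (n : ℕ) :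
    List Bool :=
  (List.range n).map (mechanicalLetter θ)

theorem mechanicalPrefix_add {R : Type*} [Ring R] [LinearOrder R] [FloorRing R] (θ : R)
    (m n : ℕ) : mechanicalPrefix θ (m + n) =
      mechanicalPrefix θ m ++ (List.range n).map (fun i => mechanicalLetter θ (m + i)) := by
  rw [mechanicalPrefix, List.range_add, List.map_append, List.map_map]
  rfl

section Floor

variable {R : Type*} [CommRing R] [LinearOrder R] [IsStrictOrderedRing R] [FloorRing R]

theorem floor_succ_mul {θ : R} (h0 : 0 ≤ θ) (h1 : θ ≤ 1) (i : ℕ) :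
    ⌊((i : R) + 1) * θ⌋ = ⌊(i : R) * θ⌋ + (mechanicalLetter θ i).toNat := by
  have lower : ⌊(i : R) * θ⌋ ≤ ⌊((i : R) + 1) * θ⌋ := Int.floor_mono (by linarith)
  have upper : ⌊((i : R) + 1) * θ⌋ ≤ ⌊(i : R) * θ⌋ + 1 := by
    rw [← Int.floor_add_one]
    exact Int.floor_mono (by linarith)
  obtain jump | no_jump := lt_or_ge ⌊(i : R) * θ⌋ ⌊((i : R) + 1) * θ⌋
  · rw [mechanicalLetter, decide_eq_true jump, Bool.toNat_true]
    omega
  · rw [mechanicalLetter, decide_eq_false no_jump.not_gt, Bool.toNat_false]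
    omega

theorem floor_succ_mul_intCast_add {θ : R} (h0 : 0 ≤ θ) (h1 : θ ≤ 1) (c : ℤ) (i : ℕ) :
    ⌊((i : R) + 1) * (c + θ)⌋ = ⌊(i : R) * (c + θ)⌋ + c + (mechanicalLetter θ i).toNat := by
  have split (n : ℕ) : ⌊(n : R) * (c + θ)⌋ = n * c + ⌊(n : R) * θ⌋ := by
    rw [← Int.floor_intCast_add]
    push_cast
    rw [mul_add]
  have split_succ := split (i + 1)
  push_cast at split_succ
  rw [split_succ, split, floor_succ_mul h0 h1]
  ring

theorem natFloor_succ_mul_natCast_add {θ : R} (h0 : 0 ≤ θ) (h1 : θ ≤ 1) (c i : ℕ) :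
    ⌊((i : R) + 1) * (c + θ)⌋₊ = ⌊(i : R) * (c + θ)⌋₊ + c + (mechanicalLetter θ i).toNat := by
  have h := floor_succ_mul_intCast_add h0 h1 c i
  rw [Int.cast_natCast, ← Int.natCast_floor_eq_floor (by positivity),
    ← Int.natCast_floor_eq_floor (by positivity)] at h
  exact_mod_cast h

end Floor

section Desubstitution

variable {R : Type*} [Field R] [LinearOrder R] [IsStrictOrderedRing R] [FloorRing R]

theorem mechanicalLetter_one_sub_inv_eq_false_iff {β : R} (hβ : 0 < β) (i : ℕ) :
    mechanicalLetter (1 - β⁻¹) i = false ↔ ∃ m : ℤ, ⌊(m : R) * β⌋ = i := by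
  have floor_eq (n : ℕ) : ⌊(n : R) * (1 - β⁻¹)⌋ = n - ⌈(n : R) / β⌉ := by
    rw [mul_one_sub, ← div_eq_mul_inv, sub_eq_add_neg, Int.floor_natCast_add, Int.floor_neg,
      ← sub_eq_add_neg]
  have floor_succ_eq := floor_eq (i + 1)
  push_cast at floor_succ_eq
  calc mechanicalLetter (1 - β⁻¹) i = false
      ↔ ⌈(i : R) / β⌉ < ⌈((i : R) + 1) / β⌉ := by
        rw [mechanicalLetter, floor_eq, floor_succ_eq, decide_eq_false_iff_not]
        omega
    _ ↔ ∃ m : ℤ, ⌈(i : R) / β⌉ ≤ m ∧ m < ⌈((i : R) + 1) / β⌉ :=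
        ⟨fun h => ⟨_, le_rfl, h⟩, fun ⟨_, hle, hlt⟩ => hle.trans_lt hlt⟩
    _ ↔ ∃ m : ℤ, ⌊(m : R) * β⌋ = i := by
        simp only [Int.ceil_le, Int.lt_ceil, div_le_iff₀ hβ, lt_div_iff₀ hβ, Int.floor_eq_iff,
          Int.cast_natCast]

theorem mechanicalLetter_natFloor_mul {β : R} (hβ : 0 < β) (m : ℕ) :
    mechanicalLetter (1 - β⁻¹) ⌊(m : R) * β⌋₊ = false :=
  (mechanicalLetter_one_sub_inv_eq_false_iff hβ _).2
    ⟨m, by rw [Int.cast_natCast, Int.natCast_floor_eq_floor (by positivity)]⟩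

theorem mechanicalLetter_eq_true_of_mem_Ioo {β : R} (hβ : 0 < β) {m i : ℕ}
    (hi : i ∈ Set.Ioo ⌊(m : R) * β⌋₊ ⌊((m : R) + 1) * β⌋₊) :
    mechanicalLetter (1 - β⁻¹) i = true := by
  rw [← Bool.not_eq_false, mechanicalLetter_one_sub_inv_eq_false_iff hβ]
  rintro ⟨p, hp⟩
  obtain ⟨i_le, lt_i_succ⟩ := Int.floor_eq_iff.1 hp
  rw [Int.cast_natCast] at i_le lt_i_succ
  have lower : (m : R) * β < p * β :=
    ((Nat.floor_lt (by positivity)).1 hi.1).trans_le i_le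
  have upper : (p : R) * β < (m + 1) * β := by
    have i_succ_le := (Nat.le_floor_iff (by positivity)).1 (Nat.succ_le_of_lt hi.2)
    exact lt_i_succ.trans_le (mod_cast i_succ_le)
  have m_lt_p : (m : ℤ) < p := by exact_mod_cast lt_of_mul_lt_mul_right lower hβ.le
  have p_lt_succ : p < (m : ℤ) + 1 := by exact_mod_cast lt_of_mul_lt_mul_right upper hβ.le
  omega

theorem phi_eq_cons_replicate (k : ℕ) (x : Bool) :
    phi k x = false :: List.replicate (k + x.toNat) true := by
  cases x <;> rfl

theorem map_mechanicalLetter_block {θ : R} (h0 : 0 ≤ θ) (h1 : θ ≤ 1) (k m : ℕ) :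
    (List.range (k + 1 + (mechanicalLetter θ m).toNat)).map
      (fun i => mechanicalLetter (1 - ((k + 1 : ℕ) + θ)⁻¹) (⌊(m : R) * ((k + 1 : ℕ) + θ)⌋₊ + i)) =
    phi k (mechanicalLetter θ m) := by
  have hβ : 0 < ((k + 1 : ℕ) : R) + θ := by positivity
  rw [phi_eq_cons_replicate, Nat.add_right_comm, List.range_succ_eq_map, List.map_cons,
    List.map_map]
  congr 1
  · exact mechanicalLetter_natFloor_mul hβ m
  rw [List.map_eq_replicate_iff.2, List.length_range]
  intro i hi
  rw [List.mem_range] at hi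
  apply mechanicalLetter_eq_true_of_mem_Ioo hβ (m := m)
  rw [natFloor_succ_mul_natCast_add h0 h1]
  constructor <;> omega

theorem flatMap_phi_mechanicalPrefix {θ : R} (h0 : 0 ≤ θ) (h1 : θ ≤ 1) (k n : ℕ) :
    (mechanicalPrefix θ n).flatMap (phi k) =
      mechanicalPrefix (1 - ((k + 1 : ℕ) + θ)⁻¹) ⌊(n : R) * ((k + 1 : ℕ) + θ)⌋₊ := by
  induction n with
  | zero => simp [mechanicalPrefix]
  | succ n ih =>
    have prefix_succ : mechanicalPrefix θ (n + 1) =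
        mechanicalPrefix θ n ++ [mechanicalLetter θ n] :=
      mechanicalPrefix_add θ n 1
    have floor_succ : ⌊((n + 1 : ℕ) : R) * ((k + 1 : ℕ) + θ)⌋₊ =
        ⌊(n : R) * ((k + 1 : ℕ) + θ)⌋₊ + (k + 1 + (mechanicalLetter θ n).toNat) := by
      rw [n.cast_succ, natFloor_succ_mul_natCast_add h0 h1, add_assoc]
    rw [prefix_succ, List.flatMap_append, ih, List.flatMap_singleton,
      ← map_mechanicalLetter_block h0 h1, floor_succ, mechanicalPrefix_add]

end Desubstitution

/-- The fractional part `β - (k + 1)` of `β`, the slope of the mechanical word fixed by `φ`. -/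
noncomputable def thetaK (k : ℕ) : ℝ := betaK k - (k + 1 : ℕ)

theorem natCast_succ_add_thetaK (k : ℕ) : ((k + 1 : ℕ) : ℝ) + thetaK k = betaK k :=
  add_sub_cancel _ _

theorem thetaK_eq_mul_sub_one (k : ℕ) : thetaK k = k * (alphaK k - 1) := by
  rw [thetaK, betaK]
  push_cast
  ring

theorem one_le_alphaK (k : ℕ) : 1 ≤ alphaK k := by
  have : 1 ≤ √(1 + 4 / (k : ℝ)) := Real.one_le_sqrt.2 (le_add_of_nonneg_right (by positivity))
  rw [alphaK]
  linarith

theorem mul_alphaK_sub_one_mul_alphaK {k : ℕ} (hk : k ≠ 0) :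
    k * (alphaK k - 1) * alphaK k = 1 := by
  have sq : √(1 + 4 / (k : ℝ)) ^ 2 = 1 + 4 / k := Real.sq_sqrt (by positivity)
  calc k * (alphaK k - 1) * alphaK k = k * (√(1 + 4 / (k : ℝ)) ^ 2 - 1) / 4 := by
        rw [alphaK]
        ring
    _ = 1 := by
        rw [sq]
        field_simp
        ring

theorem thetaK_nonneg (k : ℕ) : 0 ≤ thetaK k := by
  rw [thetaK_eq_mul_sub_one]
  exact mul_nonneg k.cast_nonneg (sub_nonneg.2 (one_le_alphaK k))

theorem thetaK_le_one {k : ℕ} (hk : k ≠ 0) : thetaK k ≤ 1 :=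
  calc thetaK k ≤ thetaK k * alphaK k :=
        le_mul_of_one_le_right (thetaK_nonneg k) (one_le_alphaK k)
    _ = 1 := by rw [thetaK_eq_mul_sub_one, mul_alphaK_sub_one_mul_alphaK hk]

theorem betaK_pos (k : ℕ) : 0 < betaK k := by
  rw [← natCast_succ_add_thetaK]
  exact add_pos_of_pos_of_nonneg (Nat.cast_pos.2 k.succ_pos) (thetaK_nonneg k)

theorem one_sub_inv_betaK {k : ℕ} (hk : k ≠ 0) : 1 - (betaK k)⁻¹ = thetaK k := by
  have key : thetaK k * betaK k = betaK k - 1 := by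
    rw [thetaK_eq_mul_sub_one, betaK]
    linear_combination (k : ℝ) * mul_alphaK_sub_one_mul_alphaK hk
  rw [← one_div, one_sub_div (betaK_pos k).ne', ← key, mul_div_cancel_right₀ _ (betaK_pos k).ne']

theorem dSeq_succ {k : ℕ} (hk : k ≠ 0) (i : ℕ) :
    dSeq k (i + 1) = k + 1 + (mechanicalLetter (thetaK k) i).toNat := by
  have h := floor_succ_mul_intCast_add (thetaK_nonneg k) (thetaK_le_one hk) (k + 1 : ℕ) i
  rw [Int.cast_natCast, natCast_succ_add_thetaK] at h
  rw [dSeq, Nat.add_sub_cancel, bSeq, bSeq, Nat.cast_succ, h]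
  push_cast
  ring

theorem exists_wordN_eq_mechanicalPrefix {k : ℕ} (hk : k ≠ 0) (N : ℕ) :
    ∃ n, wordN k N = mechanicalPrefix (thetaK k) n := by
  induction N with
  | zero =>
    refine ⟨1, ?_⟩
    have first_letter := mechanicalLetter_natFloor_mul (betaK_pos k) 0
    rw [Nat.cast_zero, zero_mul, Nat.floor_zero, one_sub_inv_betaK hk] at first_letter
    rw [mechanicalPrefix, List.range_one, List.map_singleton, first_letter, wordN,
      Function.iterate_zero_apply]
  | succ N ih =>
    obtain ⟨n, hn⟩ := ih
    refine ⟨⌊(n : ℝ) * betaK k⌋₊, ?_⟩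
    have h := flatMap_phi_mechanicalPrefix (thetaK_nonneg k) (thetaK_le_one hk) k n
    rw [natCast_succ_add_thetaK, one_sub_inv_betaK hk] at h
    rw [← h, ← hn, wordN, wordN, Function.iterate_succ_apply']

/-- For every N and every 1 ≤ j ≤ length(φ^N(σ)), the j-th letter of φ^N(σ)
    is σ iff d_j = k+1, and is τ iff d_j = k+2. -/
theorem word_letters_match_d (k : ℕ) (hk : 1 ≤ k) (N j : ℕ) (hj1 : 1 ≤ j)
    (hj2 : j ≤ (wordN k N).length) :
    ((wordN k N).getD (j - 1) false = false ↔ dSeq k j = (k : ℤ) + 1) ∧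
    ((wordN k N).getD (j - 1) false = true ↔ dSeq k j = (k : ℤ) + 2) := by
  have hk₀ : k ≠ 0 := Nat.one_le_iff_ne_zero.1 hk
  obtain ⟨n, hn⟩ := exists_wordN_eq_mechanicalPrefix hk₀ N
  obtain ⟨i, rfl⟩ : ∃ i, j = i + 1 := ⟨j - 1, by omega⟩
  have letter_eq : (wordN k N).getD i false = mechanicalLetter (thetaK k) i := by
    have hi : i < (wordN k N).length := hj2
    rw [List.getD_eq_getElem _ _ hi]
    simp only [hn, mechanicalPrefix, List.getElem_map, List.getElem_range]
  rw [Nat.add_sub_cancel, letter_eq, dSeq_succ hk₀]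
  cases mechanicalLetter (thetaK k) i <;> simp [add_assoc]
end

section
/- Let k ≥ 2 be an integer and γ = (√(k²+4k) − k)/2 (the positive root of x² + kx − k = 0, which lies in (1/2,1)). Consider the two-letter alphabet {0,1} and the morphism θ defined by θ(0) = 1^k 0 (k copies of 1 followed by 0) and θ(1) = 1^k 0 1, extended to words by concatenation, and let v_N = θ^N(1) be the N-th iterate applied to the one-letter word 1. Then for every N ≥ 0 and every j with 1 ≤ j ≤ length(v_N), the j-th letter of v_N is 1 if and only if ⌊(j+1)γ⌋ − ⌊jγ⌋ = 1 (and is 0 if and only if ⌊(j+1)γ⌋ − ⌊jγ⌋ = 0). In other words, lim_{N→∞} θ^N(1) is the characteristic Sturmian word of γ. -/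
/-- γ = (√(k² + 4k) − k)/2, the positive root of x² + kx − k = 0. -/
noncomputable def gammaK (k : ℕ) : ℝ := (Real.sqrt ((k : ℝ) ^ 2 + 4 * k) - k) / 2

/-- The morphism θ on the alphabet {0, 1}, encoded with `false` = 0 and
    `true` = 1: θ(0) = 1^k 0, θ(1) = 1^k 0 1. -/
def theta (k : ℕ) : Bool → List Bool
  | false => List.replicate k true ++ [false]
  | true => List.replicate k true ++ [false, true]

/-- v_N = θ^N(1). -/
def vWord (k N : ℕ) : List Bool := (fun w => w.flatMap (theta k))^[N] [true]

/-!
Let `c` be the characteristic word of `γ`. Its prefix of length `n` contains `⌊(n + 1)γ⌋` ones, so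
the image of that prefix under `θ` has length `m = (k + 1)n + ⌊(n + 1)γ⌋`. With `f` the fractional
part of `(n + 1)γ`, the equation `γ² = k(1 - γ)` gives

  `(m + i + 1)γ = ⌊(n + 1)γ⌋ + nk + i + (1 - γ)(f + k - i)`.

The last summand lies in `[0, 1)` for `0 ≤ i ≤ k` and in `[-1, 0)` for `i = k + 1, k + 2`, so the
`k + 2` letters of `c` that follow position `m` are `1^k 0 1`. Both `θ(0)` and `θ(1)` are prefixes
of this block, hence `θ` maps prefixes of `c` to prefixes of `c`, and the word `1` is such a prefix.
-/

section CharacteristicWord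

/-- The characteristic Sturmian word of `γ`, whose letters are indexed from `1` as usual (the value
at `0` is not a letter of the word). As in `theta`, `true` stands for the letter 1. -/
noncomputable def characteristicWord (γ : ℝ) (j : ℕ) : Bool :=
  decide (⌊((j : ℝ) + 1) * γ⌋ - ⌊(j : ℝ) * γ⌋ = 1)

/-- The prefix of length `n` of the characteristic word of `γ`, the letters at `1, …, n`. -/
noncomputable def characteristicPrefix (γ : ℝ) (n : ℕ) : List Bool :=
  (List.range' 1 n).map (characteristicWord γ)

variable {γ : ℝ}

lemma length_characteristicPrefix (γ : ℝ) (n : ℕ) : (characteristicPrefix γ n).length = n := by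
  simp [characteristicPrefix]

lemma characteristicPrefix_add (γ : ℝ) (m n : ℕ) :
    characteristicPrefix γ (m + n) =
      characteristicPrefix γ m ++ (List.range' (m + 1) n).map (characteristicWord γ) := by
  rw [characteristicPrefix, characteristicPrefix, ← List.map_append, Nat.add_comm m 1,
    List.range'_append_1]

lemma characteristicPrefix_succ (γ : ℝ) (n : ℕ) :
    characteristicPrefix γ (n + 1) = characteristicPrefix γ n ++ [characteristicWord γ (n + 1)] :=
  characteristicPrefix_add γ n 1

lemma getD_characteristicPrefix (γ : ℝ) {n j : ℕ} (hj : 1 ≤ j) (hjn : j ≤ n) (d : Bool) :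
    (characteristicPrefix γ n).getD (j - 1) d = characteristicWord γ j := by
  have hlt : j - 1 < (characteristicPrefix γ n).length := by
    rw [length_characteristicPrefix]; omega
  rw [List.getD_eq_getElem _ _ hlt]
  simp [characteristicPrefix, Nat.add_sub_cancel' hj]

lemma floor_succ_mul_sub_floor_mul (hγ₀ : 0 ≤ γ) (hγ₁ : γ < 1) (j : ℕ) :
    ⌊((j : ℝ) + 1) * γ⌋ - ⌊(j : ℝ) * γ⌋ = (characteristicWord γ j).toNat := by
  have lower : ⌊(j : ℝ) * γ⌋ ≤ ⌊((j : ℝ) + 1) * γ⌋ := Int.floor_mono (by linarith)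
  have upper : ⌊((j : ℝ) + 1) * γ⌋ ≤ ⌊(j : ℝ) * γ⌋ + 1 := by
    rw [← Int.floor_add_one]
    exact Int.floor_mono (by linarith)
  by_cases h : ⌊((j : ℝ) + 1) * γ⌋ - ⌊(j : ℝ) * γ⌋ = 1
  · simp [characteristicWord, h]
  · simp only [characteristicWord, h, decide_false, Bool.toNat_false, Nat.cast_zero]
    omega

lemma natFloor_succ_mul (hγ₀ : 0 ≤ γ) (hγ₁ : γ < 1) (j : ℕ) :
    ⌊((j : ℝ) + 1) * γ⌋₊ = ⌊(j : ℝ) * γ⌋₊ + (characteristicWord γ j).toNat := by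
  have hstep := floor_succ_mul_sub_floor_mul hγ₀ hγ₁ j
  rw [← Int.natCast_floor_eq_floor (by positivity), ← Int.natCast_floor_eq_floor (by positivity)]
    at hstep
  omega

lemma characteristicPrefix_one (hγ₀ : 1 / 2 ≤ γ) (hγ₁ : γ < 1) :
    characteristicPrefix γ 1 = [true] := by
  have hfloor_one : ⌊γ⌋ = 0 := Int.floor_eq_zero_iff.2 ⟨by linarith, hγ₁⟩
  have hfloor_two : ⌊(1 + 1) * γ⌋ = 1 := by
    rw [Int.floor_eq_iff]
    constructor <;> push_cast <;> linarith
  simp [characteristicPrefix, characteristicWord, hfloor_one, hfloor_two]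

end CharacteristicWord

lemma length_theta (k : ℕ) (a : Bool) : (theta k a).length = k + 1 + a.toNat := by
  cases a <;> simp [theta]

lemma getElem_theta (k : ℕ) (a : Bool) {i : ℕ} (hi : i < (theta k a).length) :
    (theta k a)[i] = decide (i ≠ k) := by
  rw [length_theta] at hi
  obtain hik | rfl | rfl : i < k ∨ i = k ∨ i = k + 1 := by have := a.toNat_le; omega
  · cases a <;> simp [theta, hik, hik.ne]
  · cases a <;> simp [theta]
  · cases a <;> simp [theta] at hi ⊢

section QuadraticSlope

variable {γ : ℝ} {k : ℕ}

lemma lt_one_of_sq_eq (hγ₀ : 0 < γ) (hγ : γ ^ 2 = k * (1 - γ)) : γ < 1 := by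
  have hprod : 0 < (k : ℝ) * (1 - γ) := hγ ▸ by positivity
  linarith [pos_of_mul_pos_right hprod k.cast_nonneg]

lemma one_half_lt_of_sq_eq (hγ₀ : 0 < γ) (hγ : γ ^ 2 = k * (1 - γ)) : 1 / 2 < γ := by
  have hγ₁ := lt_one_of_sq_eq hγ₀ hγ
  have hk : (1 : ℝ) ≤ k := by
    rw [Nat.one_le_cast, Nat.one_le_iff_ne_zero]
    rintro rfl
    simp [hγ₀.ne'] at hγ
  nlinarith

/-- The length `(k + 1)n + ⌊(n + 1)γ⌋` of the image under `θ` of the prefix of length `n` of the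
characteristic word of `γ`, in closed form; `⌊(n + 1)γ⌋` counts the ones of the prefix. -/
noncomputable def imageLength (γ : ℝ) (k n : ℕ) : ℕ := (k + 1) * n + ⌊((n : ℝ) + 1) * γ⌋₊

lemma imageLength_succ (hγ₀ : 0 ≤ γ) (hγ₁ : γ < 1) (k n : ℕ) :
    imageLength γ k (n + 1) =
      imageLength γ k n + (theta k (characteristicWord γ (n + 1))).length := by
  rw [imageLength, imageLength, natFloor_succ_mul hγ₀ hγ₁, length_theta, Nat.cast_add_one]
  ring

lemma imageLength_add_mul (hγ₀ : 0 ≤ γ) (hγ : γ ^ 2 = k * (1 - γ)) (n i : ℕ) :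
    ((imageLength γ k n + i + 1 : ℕ) : ℝ) * γ =
      (⌊((n : ℝ) + 1) * γ⌋₊ + n * k + i : ℕ) +
        (1 - γ) * (Int.fract (((n : ℝ) + 1) * γ) + k - i) := by
  rw [imageLength, Int.fract, ← natCast_floor_eq_intCast_floor (by positivity)]
  push_cast
  linear_combination ((n : ℝ) + 1) * hγ

lemma floor_one_sub_mul_eq_zero (hγ₀ : 0 < γ) (hγ : γ ^ 2 = k * (1 - γ)) {x : ℝ} (hx₀ : 0 ≤ x)
    (hx : x ≤ k + 1) : ⌊(1 - γ) * x⌋ = 0 := by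
  have hγ₁ := lt_one_of_sq_eq hγ₀ hγ
  rw [Int.floor_eq_zero_iff]
  refine ⟨mul_nonneg (by linarith) hx₀, ?_⟩
  calc (1 - γ) * x ≤ (1 - γ) * (k + 1) := mul_le_mul_of_nonneg_left hx (by linarith)
    _ = 1 - γ * (1 - γ) := by linear_combination -hγ
    _ < 1 := by linarith [mul_pos hγ₀ (sub_pos.2 hγ₁)]

lemma floor_one_sub_mul_eq_neg_one (hγ₀ : 1 / 2 ≤ γ) (hγ₁ : γ < 1) {x : ℝ} (hx : -2 ≤ x)
    (hx₀ : x < 0) : ⌊(1 - γ) * x⌋ = -1 := by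
  rw [Int.floor_eq_iff]
  push_cast
  constructor
  · calc (-1 : ℝ) ≤ (1 - γ) * (-2) := by linarith
      _ ≤ (1 - γ) * x := mul_le_mul_of_nonneg_left hx (by linarith)
  · linarith [mul_neg_of_pos_of_neg (sub_pos.2 hγ₁) hx₀]

lemma floor_imageLength_add_mul_of_le (hγ₀ : 0 < γ) (hγ : γ ^ 2 = k * (1 - γ)) (n : ℕ) {i : ℕ}
    (hik : i ≤ k) :
    ⌊((imageLength γ k n + i + 1 : ℕ) : ℝ) * γ⌋ = (⌊((n : ℝ) + 1) * γ⌋₊ + n * k + i : ℕ) := by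
  have hf₀ := Int.fract_nonneg (((n : ℝ) + 1) * γ)
  have hf₁ := Int.fract_lt_one (((n : ℝ) + 1) * γ)
  have hik' : (i : ℝ) ≤ k := by exact_mod_cast hik
  rw [imageLength_add_mul hγ₀.le hγ, Int.floor_natCast_add,
    floor_one_sub_mul_eq_zero hγ₀ hγ (by linarith) (by linarith [i.cast_nonneg (α := ℝ)]),
    add_zero]

lemma floor_imageLength_add_mul_of_lt (hγ₀ : 0 < γ) (hγ : γ ^ 2 = k * (1 - γ)) (n : ℕ) {i : ℕ}
    (hki : k < i) (hik : i ≤ k + 2) :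
    ⌊((imageLength γ k n + i + 1 : ℕ) : ℝ) * γ⌋ =
      (⌊((n : ℝ) + 1) * γ⌋₊ + n * k + i : ℕ) - 1 := by
  have hf₀ := Int.fract_nonneg (((n : ℝ) + 1) * γ)
  have hf₁ := Int.fract_lt_one (((n : ℝ) + 1) * γ)
  have hki' : (k : ℝ) + 1 ≤ i := by exact_mod_cast hki
  have hik' : (i : ℝ) ≤ k + 2 := by exact_mod_cast hik
  rw [imageLength_add_mul hγ₀.le hγ, Int.floor_natCast_add,
    floor_one_sub_mul_eq_neg_one (one_half_lt_of_sq_eq hγ₀ hγ).le (lt_one_of_sq_eq hγ₀ hγ)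
      (by linarith) (by linarith),
    ← sub_eq_add_neg]

lemma characteristicWord_imageLength_add (hγ₀ : 0 < γ) (hγ : γ ^ 2 = k * (1 - γ)) (n : ℕ) {i : ℕ}
    (hik : i ≤ k + 1) :
    characteristicWord γ (imageLength γ k n + i + 1) = decide (i ≠ k) := by
  have hnext : ((imageLength γ k n + i + 1 : ℕ) : ℝ) + 1 =
      (imageLength γ k n + (i + 1) + 1 : ℕ) := by
    push_cast
    ring
  rw [characteristicWord, decide_eq_decide, hnext]
  obtain hik | rfl | rfl : i < k ∨ i = k ∨ i = k + 1 := by omega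
  · rw [floor_imageLength_add_mul_of_le hγ₀ hγ n hik,
      floor_imageLength_add_mul_of_le hγ₀ hγ n hik.le]
    omega
  · rw [floor_imageLength_add_mul_of_lt hγ₀ hγ n (by omega) (by omega),
      floor_imageLength_add_mul_of_le hγ₀ hγ n le_rfl]
    omega
  · rw [floor_imageLength_add_mul_of_lt hγ₀ hγ n (by omega) (by omega),
      floor_imageLength_add_mul_of_lt hγ₀ hγ n (by omega) (by omega)]
    omega

lemma map_characteristicWord_range'_imageLength (hγ₀ : 0 < γ) (hγ : γ ^ 2 = k * (1 - γ)) (n : ℕ)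
    (a : Bool) :
    (List.range' (imageLength γ k n + 1) (theta k a).length).map (characteristicWord γ) =
      theta k a := by
  refine List.ext_getElem (by simp) fun i _ hi ↦ ?_
  have hik : i ≤ k + 1 := by have := length_theta k a; have := a.toNat_le; omega
  rw [List.getElem_map, List.getElem_range', one_mul, Nat.add_right_comm,
    characteristicWord_imageLength_add hγ₀ hγ n hik, getElem_theta]

lemma flatMap_theta_characteristicPrefix (hγ₀ : 0 < γ) (hγ : γ ^ 2 = k * (1 - γ)) (n : ℕ) :
    (characteristicPrefix γ n).flatMap (theta k) =
      characteristicPrefix γ (imageLength γ k n) := by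
  have hγ₁ := lt_one_of_sq_eq hγ₀ hγ
  induction n with
  | zero => simp [characteristicPrefix, imageLength, Nat.floor_eq_zero.2 hγ₁]
  | succ n ih =>
    rw [characteristicPrefix_succ, List.flatMap_append, List.flatMap_singleton, ih,
      imageLength_succ hγ₀.le hγ₁, characteristicPrefix_add,
      map_characteristicWord_range'_imageLength hγ₀ hγ]

end QuadraticSlope

lemma gammaK_sq (k : ℕ) : gammaK k ^ 2 = k * (1 - gammaK k) := by
  have hsqrt := Real.sq_sqrt (show (0 : ℝ) ≤ (k : ℝ) ^ 2 + 4 * k by positivity)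
  rw [gammaK]
  linear_combination hsqrt / 4

lemma gammaK_pos {k : ℕ} (hk : 1 ≤ k) : 0 < gammaK k := by
  have hk' : (0 : ℝ) < k := by exact_mod_cast hk
  have hsqrt : (k : ℝ) < √((k : ℝ) ^ 2 + 4 * k) := Real.lt_sqrt_of_sq_lt (by linarith)
  rw [gammaK]
  linarith

lemma exists_vWord_eq_characteristicPrefix {k : ℕ} (hk : 1 ≤ k) (N : ℕ) :
    ∃ n, vWord k N = characteristicPrefix (gammaK k) n := by
  have hγ₀ := gammaK_pos hk
  have hγ := gammaK_sq k
  induction N with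
  | zero =>
    exact ⟨1, (characteristicPrefix_one (one_half_lt_of_sq_eq hγ₀ hγ).le
      (lt_one_of_sq_eq hγ₀ hγ)).symm⟩
  | succ N ih =>
    obtain ⟨n, hn⟩ := ih
    refine ⟨_, Eq.trans ?_ (flatMap_theta_characteristicPrefix hγ₀ hγ n)⟩
    rw [← hn, vWord, vWord, Function.iterate_succ_apply']

theorem theta_fixed_point_characteristic_general (k : ℕ) (hk : 1 ≤ k) (N j : ℕ)
    (hj1 : 1 ≤ j) (hj2 : j ≤ (vWord k N).length) :
    ((vWord k N).getD (j - 1) false = true ↔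
      ⌊((j : ℝ) + 1) * gammaK k⌋ - ⌊(j : ℝ) * gammaK k⌋ = 1) ∧
    ((vWord k N).getD (j - 1) false = false ↔
      ⌊((j : ℝ) + 1) * gammaK k⌋ - ⌊(j : ℝ) * gammaK k⌋ = 0) := by
  have hγ₀ := gammaK_pos hk
  obtain ⟨n, hn⟩ := exists_vWord_eq_characteristicPrefix hk N
  rw [hn, length_characteristicPrefix] at hj2
  rw [hn, getD_characteristicPrefix _ hj1 hj2,
    floor_succ_mul_sub_floor_mul hγ₀.le (lt_one_of_sq_eq hγ₀ (gammaK_sq k))]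
  cases characteristicWord (gammaK k) j <;> simp

/-- For every N and every 1 ≤ j ≤ length(θ^N(1)), the j-th letter of θ^N(1)
    is 1 iff ⌊(j+1)γ⌋ − ⌊jγ⌋ = 1, and is 0 iff ⌊(j+1)γ⌋ − ⌊jγ⌋ = 0;
    i.e. lim θ^N(1) is the characteristic Sturmian word of γ. -/
theorem theta_fixed_point_characteristic (k : ℕ) (hk : 2 ≤ k) (N j : ℕ)
    (hj1 : 1 ≤ j) (hj2 : j ≤ (vWord k N).length) :
    ((vWord k N).getD (j - 1) false = true ↔
      ⌊((j : ℝ) + 1) * gammaK k⌋ - ⌊(j : ℝ) * gammaK k⌋ = 1) ∧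
    ((vWord k N).getD (j - 1) false = false ↔
      ⌊((j : ℝ) + 1) * gammaK k⌋ - ⌊(j : ℝ) * gammaK k⌋ = 0) :=
  theta_fixed_point_characteristic_general k (one_le_two.trans hk) N j hj1 hj2
end
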